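/- For any nonzero a ∈ ℤⁿ with n ≥ 5, there exists a nonzero x ∈ ℤⁿ with a₁x₁ + … + a_nx_n = 0 and ‖x‖_∞^{n−1} < ‖a‖_∞ / σ_n. -/

import Mathlib

open MeasureTheory

noncomputable def sigma (n : ℕ) : ℝ :=
  (2 / Real.pi) * ∫ t in Set.Ioi (0:ℝ), (Real.sin t / t) ^ n


noncomputable def MM (b : ℝ) (h : ℝ → ℝ) (c : ℝ) : ℝ := ∫ u in (-1:ℝ)..1, h (c + b * u)

structure Nice (h : ℝ → ℝ) : Prop where
  even : ∀ x, h (-x) = h x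
  anti : ∀ x y, 0 ≤ x → x ≤ y → h y ≤ h x
  nonneg : ∀ x, 0 ≤ h x

namespace Nice
variable {h : ℝ → ℝ}

lemma abs_eq (H : Nice h) (x : ℝ) : h |x| = h x := by
  rcases abs_choice x with e | e <;> rw [e]
  exact H.even x

lemma le_of_abs (H : Nice h) {x y : ℝ} (hxy : |x| ≤ |y|) : h y ≤ h x := by
  rw [← H.abs_eq x, ← H.abs_eq y]
  exact H.anti _ _ (abs_nonneg x) hxy

lemma le_zero (H : Nice h) (x : ℝ) : h x ≤ h 0 := H.le_of_abs (by simp)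

lemma meas (H : Nice h) : Measurable h := by
  have h1 : Antitone (fun x => h (max x 0)) := by
    intro x y hxy
    exact H.anti _ _ (le_max_right _ _) (max_le_max_right 0 hxy)
  have h2 : h = (fun x => h (max x 0)) ∘ (fun x => |x|) := by
    funext x
    simp [H.abs_eq]
  rw [h2]
  exact h1.measurable.comp measurable_norm

lemma norm_le (H : Nice h) (x : ℝ) : ‖h x‖ ≤ h 0 := by
  rw [Real.norm_of_nonneg (H.nonneg x)]
  exact H.le_zero x

lemma integrable_comp (H : Nice h) {α : Type*} [MeasurableSpace α] {μ : Measure α}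
    [IsFiniteMeasure μ] {f : α → ℝ} (hf : Measurable f) : Integrable (fun x => h (f x)) μ :=
  Integrable.of_bound (H.meas.comp hf).aestronglyMeasurable (h 0)
    (Filter.Eventually.of_forall fun _ => H.norm_le _)

lemma intervalIntegrable_comp (H : Nice h) {f : ℝ → ℝ} (hf : Measurable f) (a b : ℝ) :
    IntervalIntegrable (fun x => h (f x)) volume a b :=
  ⟨H.integrable_comp hf, H.integrable_comp hf⟩

lemma intervalIntegrable (H : Nice h) (a b : ℝ) :
    IntervalIntegrable h volume a b := H.intervalIntegrable_comp measurable_id a b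

end Nice

lemma MM_neg (b : ℝ) (h : ℝ → ℝ) : MM (-b) h = MM b h := by
  funext c
  unfold MM
  have := intervalIntegral.integral_comp_neg (a := -1) (b := 1) (fun u => h (c + b * u))
  simp only [neg_neg] at this
  rw [← this]
  congr 1
  funext u
  ring_nf

lemma MM_abs (b : ℝ) (h : ℝ → ℝ) : MM |b| h = MM b h := by
  rcases abs_choice b with e | e <;> rw [e]
  exact MM_neg b h

lemma MM_zero (h : ℝ → ℝ) (c : ℝ) : MM 0 h c = 2 * h c := by
  simp [MM]; norm_num

lemma MM_eq {b : ℝ} (hb : 0 < b) (h : ℝ → ℝ) (c : ℝ) :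
    MM b h c = b⁻¹ * ∫ x in (c - b)..(c + b), h x := by
  unfold MM
  rw [intervalIntegral.integral_comp_add_mul _ hb.ne']
  simp [sub_eq_add_neg]

lemma MM_sub {h : ℝ → ℝ} (H : Nice h) {b : ℝ} (hb : 0 < b) (c c' : ℝ) :
    MM b h c - MM b h c' = b⁻¹ * ∫ x in c..c', (h (x - b) - h (x + b)) := by
  rw [MM_eq hb, MM_eq hb, ← mul_sub, intervalIntegral.integral_sub
    (H.intervalIntegrable_comp (by fun_prop) _ _) (H.intervalIntegrable_comp (by fun_prop) _ _),
    intervalIntegral.integral_comp_sub_right, intervalIntegral.integral_comp_add_right]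
  congr 1
  have e1 := intervalIntegral.integral_add_adjacent_intervals
    (H.intervalIntegrable (c - b) (c' - b)) (H.intervalIntegrable (c' - b) (c' + b))
  have e2 := intervalIntegral.integral_add_adjacent_intervals
    (H.intervalIntegrable (c - b) (c + b)) (H.intervalIntegrable (c + b) (c' + b))
  linarith

lemma abs_sub_le_add {x b : ℝ} (hx : 0 ≤ x) (hb : 0 ≤ b) : |x - b| ≤ |x + b| := by
  rw [abs_of_nonneg (add_nonneg hx hb), abs_le]
  constructor <;> linarith

lemma Nice.MM_pos {h : ℝ → ℝ} (H : Nice h) {b : ℝ} (hb : 0 < b) : Nice (MM b h) where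
  even c := by
    unfold MM
    have := intervalIntegral.integral_comp_neg (a := -1) (b := 1) (fun u => h (c + b * u))
    simp only [neg_neg] at this
    rw [← this]
    congr 1
    funext u
    rw [← H.even]
    ring_nf
  anti c c' hc hcc' := by
    rw [← sub_nonneg, MM_sub H hb]
    refine mul_nonneg (inv_nonneg.2 hb.le) (intervalIntegral.integral_nonneg hcc' ?_)
    intro x hx
    rw [sub_nonneg]
    exact H.le_of_abs (abs_sub_le_add (hc.trans hx.1) hb.le)
  nonneg c := intervalIntegral.integral_nonneg (by norm_num) fun u _ => H.nonneg _

lemma Nice.MM {h : ℝ → ℝ} (H : Nice h) (b : ℝ) : Nice (MM b h) := by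
  rw [← MM_abs]
  rcases (abs_nonneg b).eq_or_lt with e | e
  · rw [← e]
    constructor
    · intro x; rw [MM_zero, MM_zero, H.even]
    · intro x y hx hy; rw [MM_zero, MM_zero]; linarith [H.anti x y hx hy]
    · intro x; rw [MM_zero]; linarith [H.nonneg x]
  · exact H.MM_pos e

lemma MM_comm {h : ℝ → ℝ} (H : Nice h) (b c : ℝ) : _root_.MM b (_root_.MM c h) = _root_.MM c (_root_.MM b h) := by
  funext x
  unfold _root_.MM
  simp only [intervalIntegral.integral_of_le (show (-1:ℝ) ≤ 1 by norm_num)]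
  rw [integral_integral_swap]
  · congr 1
    funext v
    congr 1
    funext u
    ring_nf
  · exact H.integrable_comp (f := fun p : ℝ × ℝ => x + b * p.1 + c * p.2) (by fun_prop)

lemma MM_anti {h : ℝ → ℝ} (H : Nice h) {b b' : ℝ} (hb : |b| ≤ |b'|) :
    MM b' h 0 ≤ MM b h 0 := by
  unfold MM
  refine intervalIntegral.integral_mono_on (by norm_num) (H.intervalIntegrable_comp (by fun_prop) _ _)
    (H.intervalIntegrable_comp (by fun_prop) _ _) ?_
  intro u _
  refine H.le_of_abs ?_
  simp only [zero_add, abs_mul]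
  gcongr

lemma MM_strict {h : ℝ → ℝ} (H : Nice h) (S : StrictAntiOn h (Set.Icc 0 2)) {b : ℝ} (hb0 : 0 ≤ b)
    (hb : b < 1) : MM 1 h 0 < MM b h 0 := by
  have i1 : ∀ a c d, IntervalIntegrable (fun u => h (0 + d * u)) volume a c := fun a c d =>
    H.intervalIntegrable_comp (by fun_prop) _ _
  have key : ∀ d, MM d h 0 = (∫ u in (-1:ℝ)..0, h (0 + d * u)) + ∫ u in (0:ℝ)..1, h (0 + d * u) := by
    intro d
    exact (intervalIntegral.integral_add_adjacent_intervals (i1 _ _ _) (i1 _ _ _)).symm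
  rw [key, key]
  refine add_lt_add_of_le_of_lt ?_ ?_
  · refine intervalIntegral.integral_mono_on (by norm_num) (i1 _ _ _) (i1 _ _ _) ?_
    intro u _
    refine H.le_of_abs ?_
    simp only [zero_add, abs_mul]
    gcongr
  · rw [← sub_pos, ← intervalIntegral.integral_sub (i1 _ _ _) (i1 _ _ _)]
    refine intervalIntegral.intervalIntegral_pos_of_pos_on ((i1 _ _ _).sub (i1 _ _ _)) ?_ (by norm_num)
    intro u hu
    rw [sub_pos]
    refine S ⟨?_, ?_⟩ ⟨?_, ?_⟩ ?_
    · nlinarith [hu.1]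
    · nlinarith [hu.1, hu.2]
    · linarith [hu.1]
    · linarith [hu.2]
    · nlinarith [hu.1]

lemma Nice.strict_MM {h : ℝ → ℝ} (H : Nice h) (S : StrictAntiOn h (Set.Icc 0 2)) :
    StrictAntiOn (_root_.MM 1 h) (Set.Icc 0 2) := by
  intro c hc c' hc' hcc
  rw [← sub_pos, MM_sub H one_pos]
  refine mul_pos (by norm_num) (intervalIntegral.intervalIntegral_pos_of_pos_on
    ((H.intervalIntegrable_comp (by fun_prop) _ _).sub (H.intervalIntegrable_comp (by fun_prop) _ _)) ?_ hcc)
  intro x hx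
  have h0 : 0 < x := hc.1.trans_lt hx.1
  have h2 : x < 2 := hx.2.trans_le hc'.2
  rw [sub_pos, ← H.abs_eq (x - 1)]
  have h3 : |x - 1| < 1 := by rw [abs_lt]; constructor <;> linarith
  have h4 : |x - 1| < x + 1 := by rw [abs_lt]; constructor <;> linarith
  calc h (x + 1) ≤ h (min (x + 1) 2) := H.anti _ _ (by positivity) (min_le_left _ _)
    _ < h |x - 1| := S ⟨abs_nonneg _, by linarith⟩ ⟨by positivity, min_le_right _ _⟩
        (lt_min h4 (by linarith))

/-- iterated averages -/
noncomputable def FF (l : List ℝ) (h : ℝ → ℝ) : ℝ → ℝ := l.foldr MM h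

lemma Nice.FF {h : ℝ → ℝ} (H : Nice h) (l : List ℝ) : Nice (FF l h) := by
  induction l with
  | nil => exact H
  | cons b l ih => exact ih.MM b

lemma FF_cons (b : ℝ) (l : List ℝ) (h : ℝ → ℝ) : FF (b :: l) h = MM b (FF l h) := rfl

lemma FF_MM {h : ℝ → ℝ} (H : Nice h) (l : List ℝ) (b : ℝ) : FF l (MM b h) = MM b (FF l h) := by
  induction l with
  | nil => rfl
  | cons c l ih => rw [FF_cons, ih, FF_cons, MM_comm (H.FF l)]

lemma FF_perm {h : ℝ → ℝ} (H : Nice h) {l l' : List ℝ} (p : l.Perm l') : FF l h = FF l' h := by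
  induction p with
  | nil => rfl
  | cons x _ ih => rw [FF_cons, FF_cons, ih]
  | swap x y l => simp only [FF_cons]; rw [MM_comm (H.FF l)]
  | trans _ _ h1 h2 => rw [h1, h2]

lemma FF_replicate_le {A : ℝ} (l : List ℝ) (hl : ∀ x ∈ l, |x| ≤ |A|) :
    ∀ {h : ℝ → ℝ}, Nice h → FF (List.replicate l.length A) h 0 ≤ FF l h 0 := by
  induction l with
  | nil => intro h H; exact le_rfl
  | cons b l ih =>
    intro h H
    have hb := hl b (by simp)
    have ih' := ih (fun x hx => hl x (by simp [hx])) (H.MM A)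
    rw [List.length_cons, List.replicate_succ, FF_cons, FF_cons, ← FF_MM H]
    refine ih'.trans ?_
    rw [FF_MM H]
    exact MM_anti (H.FF l) hb

lemma MM_scale (A b : ℝ) (h : ℝ → ℝ) (c : ℝ) :
    MM (A * b) h (A * c) = MM b (fun x => h (A * x)) c := by
  unfold MM
  congr 1
  funext u
  ring_nf

lemma FF_scale (A : ℝ) (l : List ℝ) (h : ℝ → ℝ) (c : ℝ) :
    FF (l.map (A * ·)) h (A * c) = FF l (fun x => h (A * x)) c := by
  induction l generalizing c with
  | nil => rfl
  | cons b l ih =>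
    rw [List.map_cons, FF_cons, FF_cons, MM_scale]
    congr 1
    funext x
    exact ih x

noncomputable def ind (δ : ℝ) : ℝ → ℝ := (Set.Ioo (-δ) δ).indicator 1

lemma nice_ind (δ : ℝ) : Nice (ind δ) where
  even x := by
    have : -x ∈ Set.Ioo (-δ) δ ↔ x ∈ Set.Ioo (-δ) δ := by
      simp only [Set.mem_Ioo]; constructor <;> rintro ⟨h1, h2⟩ <;> constructor <;> linarith
    simp only [ind, Set.indicator, this, Pi.one_apply]
  anti x y hx hy := by
    unfold ind
    by_cases h : y ∈ Set.Ioo (-δ) δ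
    · have : x ∈ Set.Ioo (-δ) δ := by
        simp only [Set.mem_Ioo] at h ⊢; constructor <;> linarith
      simp [Set.indicator_of_mem h, Set.indicator_of_mem this]
    · rw [Set.indicator_of_notMem h]
      exact Set.indicator_nonneg (by simp) _
  nonneg x := Set.indicator_nonneg (by simp) _

lemma integral_pi_eq_FF (n : ℕ) (a : Fin n → ℝ) {h : ℝ → ℝ} (H : Nice h) (c : ℝ) :
    ∫ u, h (c + ∑ i, a i * u i) ∂(Measure.pi (fun _ : Fin n => volume.restrict (Set.Ioc (-1:ℝ) 1)))
      = FF (List.ofFn a) h c := by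
  induction n generalizing c with
  | zero => simp [FF, measureReal_def]
  | succ n ih =>
    have mp := (measurePreserving_piFinSuccAbove
      (fun _ : Fin (n+1) => (volume.restrict (Set.Ioc (-1:ℝ) 1))) 0).symm
    rw [← mp.integral_comp', List.ofFn_succ, FF_cons]
    rw [integral_prod]
    · unfold MM
      rw [intervalIntegral.integral_of_le (by norm_num)]
      congr 1
      funext x
      rw [← ih]
      congr 1
      funext y
      simp [MeasurableEquiv.piFinSuccAbove, Fin.sum_univ_succ, add_assoc]
    · refine H.integrable_comp ?_
      fun_prop

open scoped Pointwise in
lemma mink (n : ℕ) (a : Fin n → ℤ) (ha : a ≠ 0) {r ε : ℝ} (hr : 0 < r) (hε : 0 < ε)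
    (hV : 2 ^ n * ε < r ^ (n - 1) *
      volume.real {u : Fin n → ℝ | (∀ i, |u i| ≤ 1) ∧ |∑ i, (a i : ℝ) * u i| < ε}) :
    ∃ x : Fin n → ℤ, x ≠ 0 ∧ (∑ j, a j * x j = 0) ∧ ∀ i, |(x i : ℝ)| ≤ r := by
  obtain ⟨j, hj⟩ : ∃ j, a j ≠ 0 := Function.ne_iff.1 ha
  have hn : 1 ≤ n := Nat.one_le_iff_ne_zero.2 (by rintro rfl; exact j.elim0)
  have hj' : (a j : ℝ) ≠ 0 := by exact_mod_cast hj
  set U : Set (Fin n → ℝ) := {u | (∀ i, |u i| ≤ 1) ∧ |∑ i, (a i : ℝ) * u i| < ε} with hU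
  set δ := r * ε with hδ
  have hδ0 : 0 < δ := mul_pos hr hε
  let f : (Fin n → ℝ) →ₗ[ℝ] ℝ := Fintype.linearCombination ℝ (fun i => (a i : ℝ))
  have hf : ∀ x, f x = ∑ i, (a i : ℝ) * x i := by
    intro x
    simp [f, Fintype.linearCombination_apply, mul_comm]
  let v : Fin n → ℝ := Pi.single j ((δ - 1) / a j)
  have hfv : f v = δ - 1 := by
    rw [hf]
    simp only [v, Pi.single_apply, mul_ite, mul_zero, Finset.sum_ite_eq', Finset.mem_univ, if_true]
    field_simp
  let T := LinearMap.transvection f v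
  have hT : ∀ x, T x = x + f x • v := fun x => rfl
  have hfT : ∀ x, f (T x) = δ * f x := by
    intro x
    rw [hT, map_add, map_smul, hfv, smul_eq_mul]
    ring
  have hdet : LinearMap.det T = δ := by
    rw [LinearMap.transvection.det, hfv]; ring
  let K : Set (Fin n → ℝ) := r • U
  let s : Set (Fin n → ℝ) := T ⁻¹' K
  have hUsymm : ∀ x ∈ U, -x ∈ U := by
    rintro x ⟨h1, h2⟩
    refine ⟨fun i => by simpa using h1 i, ?_⟩
    simpa using h2
  have hUconv : Convex ℝ U := by
    have : U = (Metric.closedBall 0 1) ∩ f ⁻¹' (Metric.ball 0 ε) := by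
      ext x
      simp [hU, hf, pi_norm_le_iff_of_nonneg]
    rw [this]
    exact (convex_closedBall _ _).inter ((convex_ball _ _).linear_preimage f)
  have hUvol : volume U ≠ ⊤ := by
    refine ne_top_of_le_ne_top (b := volume (Metric.closedBall (0 : Fin n → ℝ) 1)) measure_closedBall_lt_top.ne (measure_mono ?_)
    intro x hx
    simpa [pi_norm_le_iff_of_nonneg] using hx.1
  have hsvol : volume s = ENNReal.ofReal (r ^ n / δ * volume.real U) := by
    have e1 : volume s = _ := Measure.addHaar_preimage_linearMap volume (f := T) (by rw [hdet]; exact hδ0.ne') K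
    rw [e1, hdet, Measure.addHaar_smul, Module.finrank_fin_fun, ← ofReal_measureReal hUvol,
      ← ENNReal.ofReal_mul (by positivity), ← ENNReal.ofReal_mul (by positivity),
      abs_of_pos (inv_pos.2 hδ0), abs_of_pos (pow_pos hr n)]
    congr 1
    ring
  have hlt : (2:ℝ) ^ n < r ^ n / δ * volume.real U := by
    obtain ⟨m, rfl⟩ : ∃ m, n = m + 1 := ⟨n - 1, by omega⟩
    rw [Nat.add_sub_cancel] at hV
    rw [div_mul_eq_mul_div, lt_div_iff₀ hδ0, hδ, pow_succ r]
    nlinarith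
  have : Countable (Submodule.span ℤ (Set.range (Pi.basisFun ℝ (Fin n)))).toAddSubgroup :=
    inferInstanceAs (Countable (Submodule.span ℤ (Set.range (Pi.basisFun ℝ (Fin n)))))
  obtain ⟨x, hx0, hxs⟩ := exists_ne_zero_mem_lattice_of_measure_mul_two_pow_lt_measure
    (ZSpan.isAddFundamentalDomain' (Pi.basisFun ℝ (Fin n)) volume) (s := s)
    (by
      rintro x ⟨u, hu, hux⟩
      refine ⟨-u, hUsymm u hu, ?_⟩
      rw [map_neg, ← hux]
      simp)
    ((hUconv.smul r).linear_preimage T)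
    (by
      rw [hsvol, ZSpan.fundamentalDomain_pi_basisFun, Module.finrank_fin_fun, Real.volume_pi_Ico]
      simp only [sub_zero, ENNReal.ofReal_one, Finset.prod_const_one, one_mul]
      rw [show (2 : ENNReal) = ENNReal.ofReal 2 by simp, ← ENNReal.ofReal_pow (by norm_num)]
      exact ENNReal.ofReal_lt_ofReal_iff_of_nonneg (by positivity) |>.2 hlt)
  have hxm := x.2
  have hxi : ∀ i, ∃ z : ℤ, (z : ℝ) = (x : Fin n → ℝ) i := by
    intro i
    have := (Module.Basis.mem_span_iff_repr_mem ℤ (Pi.basisFun ℝ (Fin n)) (x : Fin n → ℝ)).1 hxm i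
    simpa using this
  choose z hz using hxi
  have hzx : (fun i => (z i : ℝ)) = (x : Fin n → ℝ) := funext hz
  obtain ⟨u, hu, hux⟩ := hxs
  have hux : r • u = T x := hux
  have h1 : f (T x) = r * f u := by rw [← hux, map_smul, smul_eq_mul]
  rw [hfT, hδ, mul_assoc] at h1
  have h2 : ε * f x = f u := mul_left_cancel₀ hr.ne' h1
  have h3 : |f u| < ε := by rw [hf]; exact hu.2
  rw [← h2, abs_mul, abs_of_pos hε] at h3
  have h4 : |f x| < 1 := by
    by_contra hcon
    push Not at hcon
    nlinarith
  have h5 : f x = ((∑ i, a i * z i : ℤ) : ℝ) := by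
    rw [hf]; push_cast; simp only [hz]
  have h6 : (∑ i, a i * z i : ℤ) = 0 := by
    rw [h5] at h4
    exact Int.abs_lt_one_iff.1 (by exact_mod_cast h4)
  refine ⟨z, ?_, h6, ?_⟩
  · rintro rfl
    apply hx0
    ext i
    simp [← hz]
  · intro i
    rw [hz]
    have h7 : f x = 0 := by rw [h5, h6]; simp
    have h8 : r • u = x := by rw [hux, hT, h7]; simp
    rw [← h8, Pi.smul_apply, smul_eq_mul, abs_mul, abs_of_pos hr]
    have := hu.1 i
    nlinarith
lemma integrable_sinc_pow {n : ℕ} (hn : 2 ≤ n) : Integrable (fun t : ℝ => Real.sinc t ^ n) := by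
  refine Integrable.mono' (g := fun t => 2 * (1 + t ^ 2)⁻¹) (integrable_inv_one_add_sq.const_mul 2)
    (by fun_prop) ?_
  refine Filter.Eventually.of_forall fun t => ?_
  rw [norm_pow, Real.norm_eq_abs]
  have h1 := Real.abs_sinc_le_one t
  have h0 := abs_nonneg (Real.sinc t)
  have h2 : |Real.sinc t| ^ n ≤ |Real.sinc t| ^ 2 := pow_le_pow_of_le_one h0 h1 hn
  refine h2.trans ?_
  rw [← div_eq_mul_inv, le_div_iff₀ (by positivity), sq_abs]
  have h3 : Real.sinc t ^ 2 * t ^ 2 ≤ 1 := by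
    rcases eq_or_ne t 0 with rfl | ht
    · simp
    · rw [Real.sinc_of_ne_zero ht, div_pow, div_mul_cancel₀ _ (pow_ne_zero 2 ht)]
      exact Real.sin_sq_le_one t
  have h4 : Real.sinc t ^ 2 ≤ 1 := by rw [← sq_abs]; exact pow_le_one₀ h0 h1
  nlinarith

noncomputable def tri (x : ℝ) : ℝ := max 0 (2 - |x|)

lemma nice_tri : Nice tri where
  even x := by simp [tri]
  anti x y hx hy := by
    unfold tri
    rw [abs_of_nonneg hx, abs_of_nonneg (hx.trans hy)]
    exact max_le_max le_rfl (by linarith)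
  nonneg x := le_max_left _ _

lemma tri_strict : StrictAntiOn tri (Set.Icc 0 2) := by
  intro x hx y hy hxy
  unfold tri
  rw [abs_of_nonneg hx.1, abs_of_nonneg hy.1, max_eq_right (sub_nonneg.2 hx.2),
    max_eq_right (sub_nonneg.2 hy.2)]
  linarith

lemma continuous_tri : Continuous tri := by unfold tri; fun_prop

lemma tri_support : HasCompactSupport tri := by
  refine HasCompactSupport.intro (K := Set.Icc (-2) 2) isCompact_Icc ?_
  intro x hx
  unfold tri
  refine max_eq_left ?_
  by_contra hcon
  push Not at hcon
  have := abs_lt.1 (show |x| < 2 by linarith)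
  exact hx ⟨this.1.le, this.2.le⟩

lemma tri_eq (x : ℝ) : volume.real (Set.Ioc (-1:ℝ) 1 ∩ (fun u => x - u) ⁻¹' Set.Ioc (-1:ℝ) 1) = tri x := by
  have : volume (Set.Ioc (-1:ℝ) 1 ∩ (fun u => x - u) ⁻¹' Set.Ioc (-1:ℝ) 1)
      = volume (Set.Icc (-1:ℝ) 1 ∩ Set.Icc (x-1) (x+1)) := by
    apply measure_congr
    refine Filter.EventuallyEq.inter Ioc_ae_eq_Icc ?_
    have : (fun u => x - u) ⁻¹' Set.Ioc (-1:ℝ) 1 = Set.Ico (x-1) (x+1) := by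
      ext u; simp only [Set.mem_preimage, Set.mem_Ioc, Set.mem_Ico]
      constructor <;> rintro ⟨h1, h2⟩ <;> constructor <;> linarith
    rw [this]
    exact Ico_ae_eq_Icc
  rw [measureReal_def, this, Set.Icc_inter_Icc, Real.volume_Icc, ENNReal.toReal_ofReal']
  unfold tri
  rw [max_comm]
  congr 1
  rcases le_total 0 x with h | h
  · rw [abs_of_nonneg h]
    rw [max_eq_right (by linarith), min_eq_left (by linarith)]; ring
  · rw [abs_of_nonpos h]
    rw [max_eq_left (by linarith), min_eq_right (by linarith)]; ring

lemma integral_tri {E : Type*} [NormedAddCommGroup E] [NormedSpace ℝ E] [CompleteSpace E]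
    {H : ℝ → E} (hH : StronglyMeasurable H)
    {C : ℝ} (hC : ∀ x, ‖H x‖ ≤ C) :
    ∫ u in (-1:ℝ)..1, ∫ v in (-1:ℝ)..1, H (u + v) = ∫ x, tri x • H x := by
  set I := Set.Ioc (-1:ℝ) 1 with hI
  have mI : MeasurableSet I := measurableSet_Ioc
  simp only [intervalIntegral.integral_of_le (show (-1:ℝ) ≤ 1 by norm_num), ← hI]
  have e1 : ∀ u, ∫ v in I, H (u + v) = ∫ x, I.indicator (fun _ => H x) (x - u) := by
    intro u
    rw [← integral_indicator mI, ← integral_add_left_eq_self (fun x => I.indicator (fun _ => H x) (x - u)) u]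
    congr 1
    funext v
    simp [Set.indicator]
  simp only [e1]
  rw [integral_integral_swap]
  · congr 1
    funext x
    rw [← tri_eq]
    have : ∀ u, I.indicator (fun _ => H x) (x - u) = ((fun u => x - u) ⁻¹' I).indicator (fun _ => H x) u := by
      intro u; rfl
    simp only [this]
    have m2 : MeasurableSet ((fun u => x - u) ⁻¹' I) := (measurable_const.sub measurable_id) mI
    rw [integral_indicator m2, Measure.restrict_restrict m2, integral_const, measureReal_restrict_apply_univ, Set.inter_comm]
  · have : Integrable (Set.indicator (I ×ˢ Set.Icc (-2:ℝ) 2) (fun _ => C))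
      ((volume.restrict I).prod (volume : Measure ℝ)) := by
      rw [integrable_indicator_iff (mI.prod measurableSet_Icc)]
      refine integrableOn_const ?_ 
      rw [Measure.prod_prod]
      refine ENNReal.mul_ne_top (by simp [hI]) (by simp)
    refine this.mono' ?_ ?_
    · have m3 : MeasurableSet {p : ℝ × ℝ | p.2 - p.1 ∈ I} := (measurable_snd.sub measurable_fst) mI
      exact ((hH.comp_measurable measurable_snd).indicator m3).aestronglyMeasurable
    · have h1 : ∀ᵐ p : ℝ × ℝ ∂((volume.restrict I).prod volume), p.1 ∈ I :=
        Measure.quasiMeasurePreserving_fst.ae (ae_restrict_mem mI)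
      filter_upwards [h1] with p hp
      simp only [Function.uncurry]
      by_cases h : p.2 - p.1 ∈ I
      · have : p ∈ I ×ˢ Set.Icc (-2:ℝ) 2 := by
          refine ⟨hp, ?_⟩
          simp only [hI, Set.mem_Ioc] at h hp
          constructor <;> linarith
        rw [Set.indicator_of_mem h, Set.indicator_of_mem this]
        exact hC _
      · rw [Set.indicator_of_notMem h, norm_zero]
        exact Set.indicator_nonneg (fun _ _ => (norm_nonneg _).trans (hC 0)) _

lemma integral_cexp (w : ℝ) : ∫ u in (-1:ℝ)..1, Complex.exp ((w * u : ℝ) * Complex.I) = 2 * (Real.sinc w : ℂ) := by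
  rcases eq_or_ne w 0 with rfl | hw
  · simp; norm_num
  · have := intervalIntegral.integral_comp_mul_left (a := -1) (b := 1)
      (fun t : ℝ => Complex.exp (t * Complex.I)) hw
    rw [this]
    simp only [mul_neg, mul_one]
    rw [integral_exp_mul_I_eq_sinc]
    rw [Complex.real_smul]
    have : (w : ℂ) ≠ 0 := by exact_mod_cast hw
    push_cast
    field_simp

open FourierTransform in
lemma fourier_tri (w : ℝ) : 𝓕 (fun x => (tri x : ℂ)) w = ((4 * Real.sinc (2 * Real.pi * w) ^ 2 : ℝ) : ℂ) := by
  rw [Real.fourier_eq']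
  have := integral_tri (H := fun x : ℝ => Complex.exp ((-(2 * Real.pi * w) * x : ℝ) * Complex.I)) (C := 1)
    (by apply Continuous.stronglyMeasurable; fun_prop) (fun x => by rw [Complex.norm_exp_ofReal_mul_I])
  have e : ∫ v : ℝ, Complex.exp (((-2 * Real.pi * inner ℝ v w : ℝ) : ℂ) * Complex.I) • ((tri v : ℂ)) =
      ∫ x, tri x • Complex.exp ((-(2 * Real.pi * w) * x : ℝ) * Complex.I) := by
    congr 1
    funext v
    rw [smul_eq_mul, Complex.real_smul, mul_comm]
    congr 4
    simp
    ring
  rw [e, ← this]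
  have e2 : ∀ u v : ℝ, Complex.exp ((-(2 * Real.pi * w) * (u + v) : ℝ) * Complex.I) =
    Complex.exp ((-(2 * Real.pi * w) * u : ℝ) * Complex.I) * Complex.exp ((-(2 * Real.pi * w) * v : ℝ) * Complex.I) := by
    intro u v
    rw [← Complex.exp_add]
    congr 1
    push_cast
    ring
  simp only [e2]
  simp only [intervalIntegral.integral_const_mul, intervalIntegral.integral_mul_const, integral_cexp]
  rw [Real.sinc_neg]
  push_cast
  ring

open FourierTransform in
lemma tri_inv (x : ℝ) : tri x = 4 / (2 * Real.pi) * ∫ t : ℝ, Real.sinc t ^ 2 * Real.cos (x * t) := by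
  have hint : Integrable (fun x => (tri x : ℂ)) :=
    (continuous_tri.integrable_of_hasCompactSupport tri_support).ofReal
  have hF : Integrable (𝓕 (fun x => (tri x : ℂ))) := by
    have : 𝓕 (fun x => (tri x : ℂ)) = fun w => ((4 * Real.sinc (2 * Real.pi * w) ^ 2 : ℝ) : ℂ) :=
      funext fourier_tri
    rw [this]
    refine Integrable.ofReal (Integrable.const_mul ?_ 4)
    exact (integrable_sinc_pow le_rfl).comp_mul_left' (by positivity)
  have key := hint.fourierInv_fourier_eq hF (v := x) (by
    apply Continuous.continuousAt
    exact Complex.continuous_ofReal.comp continuous_tri)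
  rw [Real.fourierInv_eq'] at key
  simp only [fourier_tri] at key
  have key2 := congrArg Complex.re key
  rw [Complex.ofReal_re] at key2
  rw [← key2]
  have i2 : Integrable (fun v : ℝ => Complex.exp (((2 * Real.pi * inner ℝ v x : ℝ) : ℂ) * Complex.I) •
      ((4 * Real.sinc (2 * Real.pi * v) ^ 2 : ℝ) : ℂ)) := by
    have : 𝓕 (fun x => (tri x : ℂ)) = fun w => ((4 * Real.sinc (2 * Real.pi * w) ^ 2 : ℝ) : ℂ) :=
      funext fourier_tri
    rw [this] at hF
    refine Integrable.bdd_mul (c := 1) hF (by apply Continuous.aestronglyMeasurable; fun_prop) ?_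
    exact Filter.Eventually.of_forall fun v => by rw [Complex.norm_exp_ofReal_mul_I]
  have e1 := integral_re i2
  simp only [RCLike.re_eq_complex_re] at e1
  rw [← e1]
  have e3 : ∀ v : ℝ, (Complex.exp (((2 * Real.pi * inner ℝ v x : ℝ) : ℂ) * Complex.I) •
      ((4 * Real.sinc (2 * Real.pi * v) ^ 2 : ℝ) : ℂ)).re =
      (fun t => 4 * (Real.sinc t ^ 2 * Real.cos (x * t))) (2 * Real.pi * v) := by
    intro v
    rw [smul_eq_mul, Complex.re_mul_ofReal, Complex.exp_ofReal_mul_I_re]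
    simp only [RCLike.inner_apply, conj_trivial]
    ring_nf
  rw [integral_congr_ae (Filter.Eventually.of_forall e3)]
  rw [Measure.integral_comp_mul_left (fun t => 4 * (Real.sinc t ^ 2 * Real.cos (x * t))) (2 * Real.pi),
    integral_const_mul, smul_eq_mul, abs_of_pos (by positivity)]
  ring

/-- the densities -/
noncomputable def GG (k : ℕ) : ℝ → ℝ := (MM 1)^[k] tri

lemma GG_succ (k : ℕ) : GG (k+1) = MM 1 (GG k) := Function.iterate_succ_apply' _ _ _

lemma nice_GG (k : ℕ) : Nice (GG k) := by
  induction k with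
  | zero => exact nice_tri
  | succ k ih => rw [GG_succ]; exact ih.MM 1

lemma GG_strict (k : ℕ) : StrictAntiOn (GG k) (Set.Icc 0 2) := by
  induction k with
  | zero => exact tri_strict
  | succ k ih => rw [GG_succ]; exact (nice_GG k).strict_MM ih

lemma integral_cos_avg (x t : ℝ) : ∫ u in (-1:ℝ)..1, Real.cos ((x + 1 * u) * t) = 2 * Real.sinc t * Real.cos (x * t) := by
  rcases eq_or_ne t 0 with rfl | ht
  · simp; norm_num
  · have : ∀ u : ℝ, (x + 1 * u) * t = x * t + t * u := by intro u; ring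
    simp only [this]
    rw [intervalIntegral.integral_comp_add_mul _ ht, integral_cos, Real.sinc_of_ne_zero ht]
    simp only [mul_neg, mul_one, smul_eq_mul]
    rw [Real.sin_add, Real.sin_add, Real.sin_neg, Real.cos_neg]
    field_simp
    ring

lemma GG_fourier (k : ℕ) (x : ℝ) :
    GG k x = 2 ^ (k+2) / (2 * Real.pi) * ∫ t : ℝ, Real.sinc t ^ (k+2) * Real.cos (x * t) := by
  induction k generalizing x with
  | zero => rw [show GG 0 = tri from rfl, tri_inv]; norm_num
  | succ k ih =>
    rw [GG_succ]
    unfold MM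
    simp only [ih]
    rw [intervalIntegral.integral_const_mul]
    have : ∫ u in (-1:ℝ)..1, ∫ t : ℝ, Real.sinc t ^ (k+2) * Real.cos ((x + 1 * u) * t) =
        ∫ t : ℝ, 2 * (Real.sinc t ^ (k+1+2) * Real.cos (x * t)) := by
      rw [intervalIntegral.integral_of_le (by norm_num), integral_integral_swap]
      · congr 1
        funext t
        rw [integral_const_mul, ← intervalIntegral.integral_of_le (by norm_num), integral_cos_avg]
        ring
      · have i1 : Integrable (fun p : ℝ × ℝ => Real.sinc p.2 ^ (k+2))
            ((volume.restrict (Set.Ioc (-1:ℝ) 1)).prod volume) :=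
          (integrable_sinc_pow (n := k+2) (by omega)).comp_snd _
        refine i1.mul_bdd (c := 1) (by apply Continuous.aestronglyMeasurable; fun_prop) ?_
        exact Filter.Eventually.of_forall fun p => Real.abs_cos_le_one _
    rw [this, integral_const_mul]
    ring

lemma GG_zero_eq (k : ℕ) : GG k 0 = 2 ^ (k+1) * sigma (k+2) := by
  rw [GG_fourier]
  simp only [zero_mul, Real.cos_zero, mul_one]
  have h1 : ∀ t : ℝ, Real.sinc t ^ (k+2) = (fun t => Real.sinc t ^ (k+2)) |t| := by
    intro t
    rcases abs_choice t with e | e <;> simp [e, Real.sinc_neg]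
  have h2 : ∫ t : ℝ, Real.sinc t ^ (k+2) = 2 * ∫ t in Set.Ioi (0:ℝ), (Real.sin t / t) ^ (k+2) := by
    rw [integral_congr_ae (Filter.Eventually.of_forall h1), integral_comp_abs (f := fun t => Real.sinc t ^ (k+2))]
    congr 1
    refine setIntegral_congr_fun measurableSet_Ioi ?_
    intro t ht
    simp only
    rw [Real.sinc_of_ne_zero (ne_of_gt ht)]
  rw [h2, sigma]
  field_simp
  ring
lemma integral_ind {b δ : ℝ} (hb : 0 < b) (c : ℝ) :
    ∫ x in (c - b)..(c + b), ind δ x = max 0 (min (c + b) δ - max (c - b) (-δ)) := by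
  rw [intervalIntegral.integral_of_le (by linarith)]
  unfold ind
  rw [integral_indicator_one measurableSet_Ioo, measureReal_restrict_apply measurableSet_Ioo]
  have : volume (Set.Ioo (-δ) δ ∩ Set.Ioc (c - b) (c + b))
      = volume (Set.Icc (-δ) δ ∩ Set.Icc (c - b) (c + b)) :=
    measure_congr (Filter.EventuallyEq.inter Ioo_ae_eq_Icc Ioc_ae_eq_Icc)
  rw [measureReal_def, this, Set.Icc_inter_Icc, Real.volume_Icc, ENNReal.toReal_ofReal', max_comm,
    min_comm, max_comm (-δ)]

lemma MM_one_ind {δ : ℝ} (hδ : 0 < δ) : MM 1 (ind δ) = fun x => δ * MM δ (ind 1) x := by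
  funext x
  rw [MM_eq one_pos, MM_eq hδ, integral_ind one_pos, integral_ind hδ]
  rw [inv_one, one_mul, mul_inv_cancel_left₀ hδ.ne']
  congr 1
  rcases le_total (x + 1) δ with h1 | h1 <;> rcases le_total (x - 1) (-δ) with h2 | h2
  · rw [min_eq_left h1, max_eq_right h2, min_eq_left (by linarith), max_eq_right (by linarith)]; ring
  · rw [min_eq_left h1, max_eq_left h2, min_eq_right (by linarith), max_eq_right (by linarith)]; ring
  · rw [min_eq_right h1, max_eq_right h2, min_eq_left (by linarith), max_eq_left (by linarith)]; ring
  · rw [min_eq_right h1, max_eq_left h2, min_eq_right (by linarith), max_eq_left (by linarith)]; ring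

lemma MM_one_ind_one : MM 1 (ind 1) = tri := by
  funext x
  rw [MM_eq one_pos, integral_ind one_pos, inv_one, one_mul]
  unfold tri
  congr 1
  rcases le_total 0 x with h | h
  · rw [abs_of_nonneg h, min_eq_right (by linarith), max_eq_left (by linarith)]; ring
  · rw [abs_of_nonpos h, min_eq_left (by linarith), max_eq_right (by linarith)]; ring

lemma MM_const_mul (b k : ℝ) (h : ℝ → ℝ) : MM b (fun x => k * h x) = fun x => k * MM b h x := by
  funext x
  unfold MM
  rw [intervalIntegral.integral_const_mul]

lemma FF_replicate_ind {δ : ℝ} (hδ : 0 < δ) (k : ℕ) :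
    FF (List.replicate (k+2) 1) (ind δ) = fun x => δ * MM δ (GG k) x := by
  induction k with
  | zero =>
    have : FF (List.replicate (0+2) 1) (ind δ) = MM 1 (MM 1 (ind δ)) := rfl
    rw [this, MM_one_ind hδ, MM_const_mul, MM_comm (nice_ind 1), MM_one_ind_one]
    rfl
  | succ k ih =>
    rw [show k + 1 + 2 = (k + 2) + 1 by ring, List.replicate_succ, FF_cons, ih, MM_const_mul,
      MM_comm (nice_GG k), GG_succ]

lemma continuous_MM {h : ℝ → ℝ} (H : Continuous h) (b : ℝ) : Continuous (MM b h) := by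
  unfold MM
  exact intervalIntegral.continuous_parametric_intervalIntegral_of_continuous' (by fun_prop) _ _

lemma continuous_GG (k : ℕ) : Continuous (GG k) := by
  induction k with
  | zero => exact continuous_tri
  | succ k ih => rw [GG_succ]; exact continuous_MM ih 1

lemma ind_scale {A : ℝ} (hA : 0 < A) (ε x : ℝ) : ind ε (A * x) = ind (ε / A) x := by
  have : A * x ∈ Set.Ioo (-ε) ε ↔ x ∈ Set.Ioo (-(ε / A)) (ε / A) := by
    simp only [Set.mem_Ioo]
    rw [← neg_div, div_lt_iff₀ hA, lt_div_iff₀ hA, mul_comm x]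
  simp only [ind, Set.indicator, this, Pi.one_apply]

lemma vol_ge (n : ℕ) (a : Fin n → ℝ) (ε : ℝ) :
    FF (List.ofFn a) (ind ε) 0 ≤
      volume.real {u : Fin n → ℝ | (∀ i, |u i| ≤ 1) ∧ |∑ i, a i * u i| < ε} := by
  rw [← integral_pi_eq_FF n a (nice_ind ε) 0, ← Measure.restrict_pi_pi]
  have e : ∀ u : Fin n → ℝ, ind ε (0 + ∑ i, a i * u i) =
      ((fun u : Fin n → ℝ => ∑ i, a i * u i) ⁻¹' Set.Ioo (-ε) ε).indicator 1 u := by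
    intro u
    rw [zero_add]
    rfl
  have hm : MeasurableSet ((fun u : Fin n → ℝ => ∑ i, a i * u i) ⁻¹' Set.Ioo (-ε) ε) :=
    (by fun_prop : Measurable (fun u : Fin n → ℝ => ∑ i, a i * u i)) measurableSet_Ioo
  simp only [e]
  rw [integral_indicator_one hm, measureReal_restrict_apply hm, ← volume_pi]
  refine measureReal_mono ?_ ?_
  · rintro u ⟨h1, h2⟩
    refine ⟨fun i => ?_, abs_lt.2 h1⟩
    have := h2 i (Set.mem_univ i)
    exact abs_le.2 ⟨this.1.le, this.2⟩
  · refine ne_top_of_le_ne_top (b := volume (Metric.closedBall (0 : Fin n → ℝ) 1)) measure_closedBall_lt_top.ne (measure_mono ?_)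
    intro x hx
    simpa [pi_norm_le_iff_of_nonneg] using hx.1

lemma FF_lower (k : ℕ) (l : List ℝ) (hl : l.length = k + 3) {A : ℝ} (hA : 0 < A)
    (hle : ∀ x ∈ l, |x| ≤ A) {b : ℝ} (hb : b ∈ l) {ε : ℝ} (hε : 0 < ε) :
    (ε / A) * MM (ε / A) (MM (|b| / A) (GG k)) 0 ≤ FF l (ind ε) 0 := by
  have N := nice_ind ε
  rw [FF_perm N (List.perm_cons_erase hb), FF_cons, ← FF_MM N]
  have h1 := FF_replicate_le (A := A) (l.erase b)
    (fun x hx => by rw [abs_of_pos hA]; exact hle x (List.mem_of_mem_erase hx)) (N.MM b)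
  refine le_trans (le_of_eq ?_) h1
  rw [List.length_erase_of_mem hb, hl, FF_MM N, ← MM_abs b, ← FF_cons]
  have h2 : |b| :: List.replicate (k + 3 - 1) A = ((|b| / A) :: List.replicate (k+2) 1).map (A * ·) := by
    simp [mul_div_cancel₀ _ hA.ne']
  have h3 := FF_scale A ((|b| / A) :: List.replicate (k+2) 1) (ind ε) 0
  rw [mul_zero] at h3
  rw [h2, h3]
  simp only [ind_scale hA]
  rw [FF_cons, FF_replicate_ind (div_pos hε hA), MM_const_mul, MM_comm (nice_GG k)]

lemma sigma_pos_lt (k : ℕ) : 0 < sigma (k+3) ∧ sigma (k+3) < 1 := by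
  have pos : ∀ k, 0 < GG k 0 := fun k =>
    ((nice_GG k).nonneg 1).trans_lt (GG_strict k (by norm_num) (by norm_num) (by norm_num))
  have h1 : GG (k+1) 0 = 2 ^ (k+2) * sigma (k+3) := GG_zero_eq (k+1)
  have step : ∀ k, GG (k+1) 0 < 2 * GG k 0 := by
    intro k
    rw [GG_succ, ← MM_zero]
    exact MM_strict (nice_GG k) (GG_strict k) le_rfl one_pos
  have h2 : GG (k+1) 0 < 2 ^ (k+2) := by
    have : ∀ k, GG k 0 ≤ 2 ^ (k+1) := by
      intro k
      induction k with
      | zero => simp [GG, tri]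
      | succ k ih => have := step k; rw [pow_succ]; linarith
    have h3 := step k
    have h4 := this k
    rw [pow_succ]; linarith
  have h3 := pos (k+1)
  have h4 : (0:ℝ) < 2 ^ (k+2) := by positivity
  rw [h1] at h2 h3
  constructor
  · exact pos_of_mul_pos_right h3 h4.le
  · nlinarith

theorem siegel_lemma_sigma (n : ℕ) (hn : 5 ≤ n) (a : Fin n → ℤ) (ha : a ≠ 0) :
    ∃ x : Fin n → ℤ, x ≠ 0 ∧ (∑ j, a j * x j = 0) ∧
      ‖(fun j => (x j : ℝ))‖ ^ (n - 1) < ‖(fun j => (a j : ℝ))‖ / sigma n := by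
  obtain ⟨k, rfl⟩ : ∃ k, n = k + 3 := ⟨n - 3, by omega⟩
  obtain ⟨hs0, hs1⟩ := sigma_pos_lt k
  set A := ‖(fun j => (a j : ℝ))‖ with hAdef
  have hle : ∀ i, |(a i : ℝ)| ≤ A := fun i => norm_le_pi_norm (fun j => (a j : ℝ)) i
  obtain ⟨j0, hj0⟩ : ∃ j, a j ≠ 0 := Function.ne_iff.1 ha
  have hA1 : 1 ≤ A := by
    refine le_trans ?_ (hle j0)
    exact_mod_cast Int.one_le_abs hj0
  have hA : 0 < A := by linarith
  by_cases hall : ∀ i, |(a i : ℝ)| = A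
  · -- all coefficients have the same absolute value
    have h01 : (0 : Fin (k+3)) ≠ 1 := by simp [Fin.ext_iff]
    have habs : |a 0| = |a 1| := by
      have : |(a 0 : ℝ)| = |(a 1 : ℝ)| := by rw [hall, hall]
      exact_mod_cast this
    obtain ⟨s, hs, hs'⟩ : ∃ s : ℤ, |s| = 1 ∧ a 0 + a 1 * s = 0 := by
      rcases abs_eq_abs.1 habs with e | e
      · exact ⟨-1, by simp, by rw [e]; ring⟩
      · exact ⟨1, by simp, by rw [e]; ring⟩
    refine ⟨Pi.single 0 1 + Pi.single 1 s, ?_, ?_, ?_⟩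
    · intro h
      have := congrFun h 0
      simp [Pi.single_apply] at this
    · simp only [Pi.add_apply, Pi.single_apply, mul_add, mul_ite, mul_zero, Finset.sum_add_distrib,
        Finset.sum_ite_eq', Finset.mem_univ, if_true, mul_one]
      exact hs'
    · have h1 : ‖(fun j => (((Pi.single 0 1 + Pi.single 1 s : Fin (k+3) → ℤ) j : ℤ) : ℝ))‖ ≤ 1 := by
        rw [pi_norm_le_iff_of_nonneg zero_le_one]
        intro i
        have hsr : |(s : ℝ)| = 1 := by exact_mod_cast hs
        by_cases hi : i = 0
        · subst hi; simp [Pi.single_apply]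
        · by_cases hi1 : i = 1
          · subst hi1; simp [Pi.single_apply, hsr]
          · simp [Pi.single_apply, hi, hi1]
      refine (pow_le_one₀ (norm_nonneg _) h1).trans_lt ?_
      rw [lt_div_iff₀ hs0]
      linarith
  · push Not at hall
    obtain ⟨j, hj⟩ := hall
    have hjlt : |(a j : ℝ)| < A := lt_of_le_of_ne (hle j) hj
    set W := MM (|(a j : ℝ)| / A) (GG k) with hW
    have NW : Nice W := (nice_GG k).MM _
    have hW0 : 2 ^ (k+2) * sigma (k+3) < W 0 := by
      have h1 : GG (k+1) 0 = 2 ^ (k+2) * sigma (k+3) := GG_zero_eq (k+1)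
      rw [← h1, GG_succ]
      exact MM_strict (nice_GG k) (GG_strict k) (by positivity) ((div_lt_one hA).2 hjlt)
    obtain ⟨κ', hκ'1, hκ'2⟩ := exists_between hW0
    obtain ⟨κ, hκ1, hκ2⟩ := exists_between hκ'2
    have hκ'0 : 0 < κ' := lt_trans (by positivity) hκ'1
    have hcont : ContinuousAt W 0 := (continuous_MM (continuous_GG k) _).continuousAt
    obtain ⟨d, hd, hdW⟩ := Metric.eventually_nhds_iff.1 (hcont.eventually (lt_mem_nhds hκ2))
    have hd2 : κ < W (d / 2) := by
      apply hdW
      rw [Real.dist_eq, sub_zero, abs_of_pos (by positivity)]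
      linarith
    set ε := A * (d / 2) with hε
    have hε0 : 0 < ε := by positivity
    have hεA : ε / A = d / 2 := by rw [hε]; field_simp
    have hV : (d / 2) * (2 * κ) ≤
        volume.real {u : Fin (k+3) → ℝ | (∀ i, |u i| ≤ 1) ∧ |∑ i, (a i : ℝ) * u i| < ε} := by
      refine le_trans ?_ (vol_ge (k+3) (fun i => (a i : ℝ)) ε)
      refine le_trans ?_ (FF_lower k (List.ofFn (fun i => (a i : ℝ))) (by simp) hA
        (by intro x hx; obtain ⟨i, rfl⟩ := (List.mem_ofFn' _ _).1 hx; exact hle i)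
        (b := (a j : ℝ)) ((List.mem_ofFn' _ _).2 ⟨j, rfl⟩) hε0)
      rw [hεA, ← hW]
      refine mul_le_mul_of_nonneg_left ?_ (by positivity)
      have h3 : ∫ _u in (-1:ℝ)..1, κ ≤ MM (d / 2) W 0 := by
        refine intervalIntegral.integral_mono_on (by norm_num) (by simp)
          (NW.intervalIntegrable_comp (by fun_prop) _ _) ?_
        intro u hu
        refine hd2.le.trans (NW.le_of_abs ?_)
        rw [zero_add, abs_mul]
        exact mul_le_of_le_one_right (abs_nonneg _) (abs_le.2 hu)
      rw [intervalIntegral.integral_const, smul_eq_mul] at h3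
      linarith
    set q := 2 ^ (k+2) * A / κ' with hq
    have hq0 : 0 < q := by positivity
    set r := q ^ (((k+2 : ℕ) : ℝ)⁻¹) with hr
    have hr0 : 0 < r := Real.rpow_pos_of_pos hq0 _
    have hrq : r ^ (k+2) = q := Real.rpow_inv_natCast_pow hq0.le (by omega)
    obtain ⟨x, hx0, hx1, hx2⟩ := mink (k+3) a ha hr0 hε0 (by
      rw [show k + 3 - 1 = k + 2 by omega, hrq]
      refine lt_of_lt_of_le ?_ (mul_le_mul_of_nonneg_left hV hq0.le)
      rw [hq, hε, div_mul_eq_mul_div, lt_div_iff₀ hκ'0, pow_succ]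
      have : 0 < 2 ^ (k+2) * A * d := by positivity
      nlinarith)
    refine ⟨x, hx0, hx1, ?_⟩
    have hxr : ‖(fun j => (x j : ℝ))‖ ≤ r := (pi_norm_le_iff_of_nonneg hr0.le).2 hx2
    rw [show k + 3 - 1 = k + 2 by omega]
    refine (pow_le_pow_left₀ (norm_nonneg _) hxr _).trans_lt ?_
    rw [hrq, hq, div_lt_div_iff₀ hκ'0 hs0]
    nlinarith
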